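/- Let X be a two-dimensional polyhedral real Banach space whose closed unit ball has extreme points ±v₁, ±v₂, …, ±v_m. Then J(X) = max{β(vᵢ) : 1 ≤ i ≤ m}; equivalently, J(X) = max{‖vᵢ + wᵢ‖ : 1 ≤ i ≤ m, wᵢ ∈ S_X, vᵢ ⊥_I wᵢ}. -/

import Mathlib

lemma aux_dir (p q r u : ℝ) : ∃ t s : ℝ, (t ≠ 0 ∨ s ≠ 0) ∧ |t| ≤ 1 ∧ |s| ≤ 1 ∧
    ((0 < t * p + s * q ∧ 0 < t * r - s * u) ∨ (t * p + s * q = 0 ∧ t * r - s * u = 0)) := by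
  have key : ∃ t s : ℝ, (t ≠ 0 ∨ s ≠ 0) ∧
    ((0 < t * p + s * q ∧ 0 < t * r - s * u) ∨ (t * p + s * q = 0 ∧ t * r - s * u = 0)) := by
    by_cases hD : p * u + q * r = 0
    · by_cases h1 : q = 0 ∧ p = 0
      · by_cases h2 : u = 0 ∧ r = 0
        · exact ⟨1, 0, by simp, Or.inr (by simp [h1, h2])⟩
        · refine ⟨u, r, by tauto, Or.inr ⟨by rw [h1.1, h1.2]; ring, by ring⟩⟩
      · refine ⟨q, -p, ?_, Or.inr ⟨by ring, by linarith⟩⟩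
        by_contra hc
        push Not at hc
        exact h1 ⟨hc.1, by linarith [hc.2]⟩
    · have e1 : (u + q) / (p * u + q * r) * p + (r - p) / (p * u + q * r) * q = 1 := by
        rw [div_mul_eq_mul_div, div_mul_eq_mul_div, ← add_div, div_eq_one_iff_eq hD]; ring
      have e2 : (u + q) / (p * u + q * r) * r - (r - p) / (p * u + q * r) * u = 1 := by
        rw [div_mul_eq_mul_div, div_mul_eq_mul_div, ← sub_div, div_eq_one_iff_eq hD]; ring
      refine ⟨(u + q) / (p * u + q * r), (r - p) / (p * u + q * r), ?_, Or.inl ?_⟩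
      · by_contra hc
        push Not at hc
        rw [hc.1, hc.2] at e1
        norm_num at e1
      · rw [e1, e2]; norm_num
  obtain ⟨t, s, hts, h⟩ := key
  have hc : 0 < |t| + |s| := by
    rcases hts with h | h
    · have := abs_pos.2 h; positivity
    · have := abs_pos.2 h; positivity
  have hi : 0 < (|t| + |s|)⁻¹ := inv_pos.2 hc
  have hm : (|t| + |s|)⁻¹ * (|t| + |s|) = 1 := inv_mul_cancel₀ hc.ne'
  set c := (|t| + |s|)⁻¹
  refine ⟨c * t, c * s, ?_, ?_, ?_, ?_⟩
  · rcases hts with h | h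
    · exact Or.inl (mul_ne_zero hi.ne' h)
    · exact Or.inr (mul_ne_zero hi.ne' h)
  · rw [abs_mul, abs_of_pos hi]; nlinarith [abs_nonneg s]
  · rw [abs_mul, abs_of_pos hi]; nlinarith [abs_nonneg t]
  · have e1 : c * t * p + c * s * q = c * (t * p + s * q) := by ring
    have e2 : c * t * r - c * s * u = c * (t * r - s * u) := by ring
    rw [e1, e2]
    rcases h with ⟨h1, h2⟩ | ⟨h1, h2⟩
    · exact Or.inl ⟨mul_pos hi h1, mul_pos hi h2⟩
    · exact Or.inr ⟨by rw [h1, mul_zero], by rw [h2, mul_zero]⟩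

lemma aux_unit {X : Type*} [NormedAddCommGroup X] [NormedSpace ℝ X] {x d : X} (hx : ‖x‖ = 1)
    (h1 : ‖x + d‖ ≤ 1) (h2 : ‖x - d‖ ≤ 1) (t : ℝ) (ht : |t| ≤ 1) : ‖x + t • d‖ = 1 := by
  have hle : ∀ t : ℝ, |t| ≤ 1 → ‖x + t • d‖ ≤ 1 := by
    intro t ht
    obtain ⟨ha, hb⟩ := abs_le.1 ht
    have e : x + t • d = ((1 + t) / 2) • (x + d) + ((1 - t) / 2) • (x - d) := by module
    rw [e]
    refine (norm_add_le _ _).trans ?_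
    rw [norm_smul, norm_smul, Real.norm_of_nonneg (by linarith), Real.norm_of_nonneg (by linarith)]
    nlinarith
  refine le_antisymm (hle t ht) ?_
  have h3 := hle (-t) (by rwa [abs_neg])
  have e : (2 : ℝ) • x = (x + t • d) + (x + (-t) • d) := by module
  have h4 := norm_add_le (x + t • d) (x + (-t) • d)
  rw [← e, norm_smul, hx] at h4
  norm_num at h4 h3 ⊢
  linarith

lemma aux_ext {X : Type*} [NormedAddCommGroup X] [NormedSpace ℝ X] {x : X} (hx : ‖x‖ = 1)
    (hne : x ∉ Set.extremePoints ℝ (Metric.closedBall (0 : X) 1)) :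
    ∃ d : X, d ≠ 0 ∧ ‖x + d‖ ≤ 1 ∧ ‖x - d‖ ≤ 1 := by
  by_contra hcon
  push Not at hcon
  apply hne
  rw [mem_extremePoints_iff_left]
  refine ⟨by simp [hx], ?_⟩
  rintro a ha b hb ⟨s, t, hs, ht, hst, rfl⟩
  simp only [mem_closedBall_zero_iff] at ha hb
  have comb : ∀ p q : ℝ, 0 ≤ p → 0 ≤ q → p + q = 1 → ‖p • a + q • b‖ ≤ 1 := by
    intro p q hp hq hpq
    refine (norm_add_le _ _).trans ?_
    rw [norm_smul, norm_smul, Real.norm_of_nonneg hp, Real.norm_of_nonneg hq]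
    nlinarith
  have hc : 0 < min s t := lt_min hs ht
  have hc1 := min_le_left s t
  have hc2 := min_le_right s t
  set c := min s t
  by_cases hab : a = b
  · subst hab
    rw [← add_smul, hst, one_smul]
  · exfalso
    have h := hcon (c • (a - b)) (smul_ne_zero hc.ne' (sub_ne_zero.2 hab)) (by
      have := comb (s + c) (t - c) (by linarith) (by linarith) (by linarith)
      convert this using 2; module)
    have := comb (s - c) (t + c) (by linarith) (by linarith) (by linarith)
    have e : s • a + t • b - c • (a - b) = (s - c) • a + (t + c) • b := by module
    rw [e] at h
    linarith

lemma aux_iso {X : Type*} [NormedAddCommGroup X] [NormedSpace ℝ X] {v y : X}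
    (hv : ‖v‖ = 1) (hy : ‖y‖ = 1) (h1 : 1 ≤ ‖v - y‖) (h2 : ‖v - y‖ ≤ ‖v + y‖) :
    ∃ w : X, ‖w‖ = 1 ∧ ‖v + w‖ = ‖v - w‖ ∧ ‖v - y‖ ≤ ‖v + w‖ := by
  set M := ‖v - y‖ with hM
  let g : ℝ → ℝ := fun l => ‖‖y - l • v‖ • v - (y - l • v)‖ - ‖‖y - l • v‖ • v + (y - l • v)‖
  have hg : Continuous g := by fun_prop
  have g0 : g 0 ≤ 0 := by
    simp only [g, zero_smul, sub_zero, hy, one_smul]; linarith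
  have g1 : 0 ≤ g 1 := by
    have hN : ‖y - (1 : ℝ) • v‖ = M := by rw [one_smul, hM, norm_sub_rev]
    simp only [g, hN]
    have a1 : ‖M • v + (y - (1 : ℝ) • v)‖ ≤ M := by
      have e : M • v + (y - (1 : ℝ) • v) = (M - 1) • v + y := by module
      rw [e]
      refine (norm_add_le _ _).trans ?_
      rw [norm_smul, hv, hy, Real.norm_of_nonneg (by linarith)]; linarith
    have a2 : M ≤ ‖M • v - (y - (1 : ℝ) • v)‖ := by
      have e : M • v - (y - (1 : ℝ) • v) = (M + 1) • v - y := by module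
      rw [e]
      have := norm_sub_norm_le ((M + 1) • v) y
      rw [norm_smul, hv, hy, Real.norm_of_nonneg (by linarith)] at this; linarith
    linarith
  obtain ⟨l, ⟨hl0, hl1⟩, hl⟩ := intermediate_value_Icc (zero_le_one (α := ℝ)) hg.continuousOn
    (show (0 : ℝ) ∈ Set.Icc (g 0) (g 1) from ⟨g0, g1⟩)
  have hNlo : 1 - l ≤ ‖y - l • v‖ := by
    have := norm_sub_norm_le y (l • v)
    rw [norm_smul, hv, hy, Real.norm_of_nonneg hl0] at this; linarith
  have hNhi : ‖y - l • v‖ ≤ (1 - l) + l * M := by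
    have e : y - l • v = (1 - l) • y - l • (v - y) := by module
    rw [e]
    refine (norm_sub_le _ _).trans ?_
    rw [norm_smul, norm_smul, hy, Real.norm_of_nonneg hl0, Real.norm_of_nonneg (by linarith)]
    linarith
  have hN0 : 0 < ‖y - l • v‖ := by
    by_contra hc
    have hz : l = 1 := by linarith
    rw [hz, one_smul, norm_sub_rev] at hc
    linarith
  simp only [g] at hl
  set N := ‖y - l • v‖ with hNdef
  obtain ⟨ψ, hψ, hψM⟩ := exists_dual_vector'' ℝ (v - y)
  have hψ' : ψ v - ψ y = M := by rw [← map_sub, hψM]; simp [hM]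
  have hle : ∀ z, ψ z ≤ ‖z‖ := fun z => by
    have := ψ.le_opNorm z
    have h3 := le_abs_self (ψ z)
    rw [Real.norm_eq_abs] at this
    nlinarith [norm_nonneg z]
  have hyneg : -1 ≤ ψ y := by
    have := hle (-y)
    rw [norm_neg, hy, map_neg] at this; linarith
  have hmain : N * M ≤ ‖N • v - (y - l • v)‖ := by
    have h3 := hle (N • v - (y - l • v))
    simp only [map_sub, map_smul, smul_eq_mul] at h3
    refine le_trans ?_ h3
    have hva : ψ v = M + ψ y := by linarith
    rw [hva]
    rcases le_total (ψ y) 0 with hb | hb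
    · have k1 : (N - 1) * (-ψ y) ≤ l * (M - 1) * (-ψ y) :=
        mul_le_mul_of_nonneg_right (by linarith) (by linarith)
      have k2 : 0 ≤ l * (M * (1 + ψ y)) :=
        mul_nonneg hl0 (mul_nonneg (by linarith) (by linarith))
      nlinarith
    · have k1 : (1 - N) * ψ y ≤ l * ψ y := mul_le_mul_of_nonneg_right (by linarith) hb
      have k2 : 0 ≤ l * M := mul_nonneg hl0 (by linarith)
      nlinarith
  have hNi : 0 < N⁻¹ := inv_pos.2 hN0
  have ep : v + N⁻¹ • (y - l • v) = N⁻¹ • (N • v + (y - l • v)) := by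
    rw [smul_add, smul_smul, inv_mul_cancel₀ hN0.ne', one_smul]
  have em : v - N⁻¹ • (y - l • v) = N⁻¹ • (N • v - (y - l • v)) := by
    rw [smul_sub N⁻¹ (N • v), smul_smul, inv_mul_cancel₀ hN0.ne', one_smul]
  refine ⟨N⁻¹ • (y - l • v), ?_, ?_, ?_⟩
  · rw [norm_smul, Real.norm_of_nonneg hNi.le, ← hNdef, inv_mul_cancel₀ hN0.ne']
  · rw [ep, em, norm_smul, norm_smul]
    congr 1; linarith
  · rw [ep, norm_smul, Real.norm_of_nonneg hNi.le]
    have : ‖N • v + (y - l • v)‖ = ‖N • v - (y - l • v)‖ := by linarith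
    rw [this, inv_mul_eq_div, le_div_iff₀ hN0]
    linarith

lemma aux_max {X : Type*} [NormedAddCommGroup X] [NormedSpace ℝ X] [FiniteDimensional ℝ X]
    (hne : ∃ x : X, ‖x‖ = 1) :
    ∃ x y : X, ‖x‖ = 1 ∧ ‖y‖ = 1 ∧
      (∀ a b : X, ‖a‖ = 1 → ‖b‖ = 1 → min ‖a + b‖ ‖a - b‖ ≤ min ‖x + y‖ ‖x - y‖) ∧
      (x ∈ Set.extremePoints ℝ (Metric.closedBall (0 : X) 1) ∨
        y ∈ Set.extremePoints ℝ (Metric.closedBall (0 : X) 1)) := by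
  haveI : ProperSpace X := FiniteDimensional.proper ℝ X
  obtain ⟨x0, hx0⟩ := hne
  have hS : IsCompact (Metric.sphere (0 : X) 1 ×ˢ Metric.sphere (0 : X) 1) :=
    (isCompact_sphere _ _).prod (isCompact_sphere _ _)
  obtain ⟨⟨p, q⟩, hpq, hmax⟩ := hS.exists_isMaxOn ⟨(x0, x0), by simp [hx0]⟩
    (f := fun z : X × X => min ‖z.1 + z.2‖ ‖z.1 - z.2‖) (by fun_prop)
  have hmax' : ∀ a b : X, ‖a‖ = 1 → ‖b‖ = 1 → min ‖a + b‖ ‖a - b‖ ≤ min ‖p + q‖ ‖p - q‖ := by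
    intro a b ha hb
    exact hmax (show (a, b) ∈ _ by simp [ha, hb])
  set M := min ‖p + q‖ ‖p - q‖ with hM
  have hK : IsCompact ((Metric.sphere (0 : X) 1 ×ˢ Metric.sphere (0 : X) 1) ∩
      {z : X × X | M ≤ min ‖z.1 + z.2‖ ‖z.1 - z.2‖}) :=
    hS.inter_right (isClosed_le (by fun_prop) (by fun_prop))
  let T := toEuclidean (E := X)
  obtain ⟨⟨x, y⟩, ⟨hxy, hxyM⟩, hQ⟩ := hK.exists_isMaxOn ⟨(p, q), hpq, le_refl M⟩
    (f := fun z : X × X => ‖T z.1‖ ^ 2 + ‖T z.2‖ ^ 2) (by fun_prop)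
  simp only [Set.mem_prod, mem_sphere_zero_iff_norm] at hxy
  obtain ⟨hx, hy⟩ := hxy
  simp only [Set.mem_setOf_eq] at hxyM
  refine ⟨x, y, hx, hy, fun a b ha hb => (hmax' a b ha hb).trans hxyM, ?_⟩
  by_contra hcon
  push Not at hcon
  obtain ⟨d, hd, hd1, hd2⟩ := aux_ext hx hcon.1
  obtain ⟨e, he, he1, he2⟩ := aux_ext hy hcon.2
  obtain ⟨φ, hφ, hφM⟩ := exists_dual_vector'' ℝ (x + y)
  obtain ⟨ψ, hψ, hψM⟩ := exists_dual_vector'' ℝ (x - y)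
  have hle : ∀ f : StrongDual ℝ X, ‖f‖ ≤ 1 → ∀ z, f z ≤ ‖z‖ := fun f hf z => by
    have := f.le_opNorm z
    have h3 := le_abs_self (f z)
    rw [Real.norm_eq_abs] at this
    nlinarith [norm_nonneg z]
  have hφM' : M ≤ φ x + φ y := by
    rw [← map_add, hφM]; exact hxyM.trans (min_le_left _ _)
  have hψM' : M ≤ ψ x - ψ y := by
    rw [← map_sub, hψM]; exact hxyM.trans (min_le_right _ _)
  have lowP : ∀ t s : ℝ, M + (t * φ d + s * φ e) ≤ ‖(x + t • d) + (y + s • e)‖ := by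
    intro t s
    have := hle φ hφ ((x + t • d) + (y + s • e))
    simp only [map_add, map_smul, smul_eq_mul] at this
    linarith
  have lowM : ∀ t s : ℝ, M + (t * ψ d - s * ψ e) ≤ ‖(x + t • d) - (y + s • e)‖ := by
    intro t s
    have := hle ψ hψ ((x + t • d) - (y + s • e))
    simp only [map_add, map_sub, map_smul, smul_eq_mul] at this
    linarith
  obtain ⟨t, s, hts, ht, hs, h⟩ := aux_dir (φ d) (φ e) (ψ d) (ψ e)
  have ux := aux_unit hx hd1 hd2
  have uy := aux_unit hy he1 he2
  rcases h with ⟨h1, h2⟩ | ⟨h1, h2⟩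
  · have k := hmax' _ _ (ux t ht) (uy s hs)
    have k' : M < min ‖(x + t • d) + (y + s • e)‖ ‖(x + t • d) - (y + s • e)‖ :=
      lt_min (by linarith [lowP t s]) (by linarith [lowM t s])
    linarith
  · have mem : ∀ t s : ℝ, |t| ≤ 1 → |s| ≤ 1 → t * φ d + s * φ e = 0 → t * ψ d - s * ψ e = 0 →
        ‖T (x + t • d)‖ ^ 2 + ‖T (y + s • e)‖ ^ 2 ≤ ‖T x‖ ^ 2 + ‖T y‖ ^ 2 := by
      intro t s ht hs h1 h2
      have hm : (x + t • d, y + s • e) ∈ (Metric.sphere (0 : X) 1 ×ˢ Metric.sphere (0 : X) 1) ∩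
          {z : X × X | M ≤ min ‖z.1 + z.2‖ ‖z.1 - z.2‖} := by
        refine ⟨?_, ?_⟩
        · simp [ux t ht, uy s hs]
        · have k1 : M ≤ ‖(x + t • d) + (y + s • e)‖ := by linarith [lowP t s]
          have k2 : M ≤ ‖(x + t • d) - (y + s • e)‖ := by linarith [lowM t s]
          exact le_min k1 k2
      have := isMaxOn_iff.1 hQ _ hm
      exact this
    have m1 := mem t s ht hs h1 h2
    have m2 := mem (-t) (-s) (by rwa [abs_neg]) (by rwa [abs_neg]) (by linarith) (by linarith)
    have p1 := parallelogram_law_with_norm ℝ (T x) (T (t • d))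
    have p2 := parallelogram_law_with_norm ℝ (T y) (T (s • e))
    simp only [neg_smul, ← sub_eq_add_neg, map_add, map_sub] at m1 m2
    have z : 0 < ‖T (t • d)‖ ^ 2 + ‖T (s • e)‖ ^ 2 := by
      rcases hts with h | h
      · have : 0 < ‖T (t • d)‖ := norm_pos_iff.2 (by simp [h, hd])
        positivity
      · have : 0 < ‖T (s • e)‖ := norm_pos_iff.2 (by simp [h, he])
        positivity
    nlinarith


/-- If `X` is a two-dimensional polyhedral real Banach space whose closed unit ball
has extreme points exactly `±v₁, …, ±v_m`, then the James constant `J(X)` equals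
`max {β(vᵢ) : 1 ≤ i ≤ m}`, which also equals
`max {‖vᵢ + wᵢ‖ : 1 ≤ i ≤ m, wᵢ ∈ S_X, vᵢ ⊥_I wᵢ}`. -/
theorem stmt10 {X : Type*} [NormedAddCommGroup X] [NormedSpace ℝ X] [CompleteSpace X]
    (hdim : Module.finrank ℝ X = 2)
    (m : ℕ) (hm : 0 < m) (v : Fin m → X) (hv : ∀ i, ‖v i‖ = 1)
    (hext : Set.extremePoints ℝ (Metric.closedBall (0 : X) 1)
      = {x : X | ∃ i, x = v i ∨ x = -v i}) :
    sSup {r : ℝ | ∃ x y : X, ‖x‖ = 1 ∧ ‖y‖ = 1 ∧ r = min ‖x + y‖ ‖x - y‖}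
      = sSup {r : ℝ | ∃ i, r = sSup {s : ℝ | ∃ y : X, ‖y‖ = 1 ∧
          s = min ‖v i + y‖ ‖v i - y‖}} ∧
    sSup {r : ℝ | ∃ x y : X, ‖x‖ = 1 ∧ ‖y‖ = 1 ∧ r = min ‖x + y‖ ‖x - y‖}
      = sSup {r : ℝ | ∃ i, ∃ w : X, ‖w‖ = 1 ∧ ‖v i + w‖ = ‖v i - w‖ ∧
          r = ‖v i + w‖} := by
  haveI : FiniteDimensional ℝ X := Module.finite_of_finrank_pos (by omega)
  let i0 : Fin m := ⟨0, hm⟩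
  obtain ⟨x, y, hx, hy, hmax, hor⟩ := aux_max (X := X) ⟨v i0, hv i0⟩
  -- the maximum is at least one
  have hM1 : 1 ≤ min ‖x + y‖ ‖x - y‖ := by
    obtain ⟨f, hf, hfv⟩ := exists_dual_vector'' ℝ (v i0)
    have hfv' : f (v i0) = 1 := by rw [hfv, hv i0]; simp
    have hle : ∀ z, f z ≤ ‖z‖ := fun z => by
      have := f.le_opNorm z
      have h3 := le_abs_self (f z)
      rw [Real.norm_eq_abs] at this
      nlinarith [norm_nonneg z]
    have hker : ∃ z : X, z ≠ 0 ∧ f z = 0 := by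
      have h := LinearMap.ker_ne_bot_of_finrank_lt (f := (f : X →ₗ[ℝ] ℝ)) (by simp [hdim])
      obtain ⟨z, hz, hz0⟩ := (Submodule.ne_bot_iff _).1 h
      exact ⟨z, hz0, by simpa using hz⟩
    obtain ⟨z, hz0, hz⟩ := hker
    have hu : ‖(‖z‖⁻¹ : ℝ) • z‖ = 1 := by
      rw [norm_smul, norm_inv, norm_norm, inv_mul_cancel₀ (norm_ne_zero_iff.2 hz0)]
    refine le_trans (le_min ?_ ?_) (hmax (v i0) ((‖z‖⁻¹ : ℝ) • z) (hv i0) hu)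
    · have := hle (v i0 + (‖z‖⁻¹ : ℝ) • z)
      simpa [hfv', hz] using this
    · have := hle (v i0 - (‖z‖⁻¹ : ℝ) • z)
      simpa [hfv', hz] using this
  set M := min ‖x + y‖ ‖x - y‖ with hM
  have hvert : ∃ i, ∃ u : X, ‖u‖ = 1 ∧ min ‖v i + u‖ ‖v i - u‖ = M := by
    have key : ∀ a b : X, ‖b‖ = 1 → a ∈ Set.extremePoints ℝ (Metric.closedBall (0 : X) 1) →
        min ‖a + b‖ ‖a - b‖ = M → ∃ i, ∃ u : X, ‖u‖ = 1 ∧ min ‖v i + u‖ ‖v i - u‖ = M := by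
      intro a b hb ha hab
      rw [hext] at ha
      obtain ⟨i, rfl | rfl⟩ := ha
      · exact ⟨i, b, hb, hab⟩
      · refine ⟨i, b, hb, ?_⟩
        rw [← hab, min_comm, ← norm_neg (v i - b), ← norm_neg (v i + b)]
        congr 2 <;> abel
    rcases hor with h | h
    · exact key x y hy h rfl
    · refine key y x hx h ?_
      rw [hM, add_comm, norm_sub_rev]
  obtain ⟨i, u, hu, hiu⟩ := hvert
  have hw : ∃ w : X, ‖w‖ = 1 ∧ ‖v i + w‖ = ‖v i - w‖ ∧ M ≤ ‖v i + w‖ := by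
    rcases le_total ‖v i - u‖ ‖v i + u‖ with h | h
    · rw [min_eq_right h] at hiu
      have := aux_iso (hv i) hu (by rw [hiu]; exact hM1) h
      rwa [hiu] at this
    · rw [min_eq_left h] at hiu
      have := aux_iso (y := -u) (hv i) (by rwa [norm_neg])
        (by rw [sub_neg_eq_add, hiu]; exact hM1) (by rwa [sub_neg_eq_add, ← sub_eq_add_neg])
      rwa [sub_neg_eq_add, hiu] at this
  obtain ⟨w, hw1, hw2, hw3⟩ := hw
  have hJ : sSup {r : ℝ | ∃ x y : X, ‖x‖ = 1 ∧ ‖y‖ = 1 ∧ r = min ‖x + y‖ ‖x - y‖} = M := by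
    apply IsGreatest.csSup_eq
    refine ⟨⟨x, y, hx, hy, rfl⟩, ?_⟩
    rintro r ⟨a, b, ha, hb, rfl⟩
    exact hmax a b ha hb
  have hbeta : ∀ j, sSup {s : ℝ | ∃ y : X, ‖y‖ = 1 ∧ s = min ‖v j + y‖ ‖v j - y‖} ≤ M := by
    intro j
    refine csSup_le (Set.nonempty_of_mem (x := min ‖v j + v j‖ ‖v j - v j‖) ⟨v j, hv j, rfl⟩) ?_
    rintro r ⟨b, hb, rfl⟩
    exact hmax _ b (hv j) hb
  rw [hJ]
  constructor
  · symm
    apply IsGreatest.csSup_eq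
    refine ⟨⟨i, ?_⟩, ?_⟩
    · refine le_antisymm (le_csSup ⟨M, ?_⟩ ⟨u, hu, hiu.symm⟩) (hbeta i)
      rintro r ⟨b, hb, rfl⟩
      exact hmax _ b (hv i) hb
    · rintro r ⟨j, rfl⟩
      exact hbeta j
  · symm
    have hub : ∀ j, ∀ w : X, ‖w‖ = 1 → ‖v j + w‖ = ‖v j - w‖ → ‖v j + w‖ ≤ M := by
      intro j w h1 h2
      have := hmax _ w (hv j) h1
      rwa [← h2, min_self] at this
    apply IsGreatest.csSup_eq
    refine ⟨⟨i, w, hw1, hw2, le_antisymm hw3 (hub i w hw1 hw2)⟩, ?_⟩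
    rintro r ⟨j, w', h1, h2, rfl⟩
    exact hub j w' h1 h2
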